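/- In an NIP theory, if an unstable formula φ(x,y) has the order property witnessed by indiscernible sequences I and J, then there is a formula ϑ(y₁,y₂) with parameters from ∪J which defines a quasi-order on the monster model and linearly orders an infinite subsequence of J. -/

import Mathlib

open FirstOrder Cardinal

universe u

variable {L : FirstOrder.Language.{u, u}} {M : Type u} [L.Structure M]

/-- A formula in `m` free variables together with a tuple of parameters from `M`. -/
structure PFormula (L : FirstOrder.Language.{u, u}) (M : Type u) [L.Structure M] (m : ℕ) where
  n : ℕ
  toFormula : L.Formula (Fin m ⊕ Fin n)
  par : Fin n → M

namespace PFormula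

variable {m : ℕ}

/-- Realization of a parametrized formula by an `m`-tuple. -/
def Realize (ψ : PFormula L M m) (a : Fin m → M) : Prop :=
  ψ.toFormula.Realize (Sum.elim a ψ.par)

/-- Realization of a parametrized formula in one variable by an element. -/
def Realize1 (ψ : PFormula L M 1) (a : M) : Prop :=
  ψ.Realize fun _ => a

/-- Negation of a parametrized formula. -/
def not (ψ : PFormula L M m) : PFormula L M m :=
  ⟨ψ.n, ψ.toFormula.not, ψ.par⟩

/-- The parameters of `ψ` all lie in `B`. -/
def Over (ψ : PFormula L M m) (B : Set M) : Prop :=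
  ∀ i, ψ.par i ∈ B

end PFormula

/-- Two tuples have the same type over the parameter set `A`. -/
def SameTypeOver (L : FirstOrder.Language.{u, u}) {M : Type u} [L.Structure M]
    (A : Set M) {γ : Type} (b c : γ → M) : Prop :=
  ∀ (k : ℕ) (φ : L.Formula (γ ⊕ Fin k)) (a : Fin k → M),
    (∀ i, a i ∈ A) → (φ.Realize (Sum.elim b a) ↔ φ.Realize (Sum.elim c a))

/-- A sequence of `d`-tuples, indexed by a linear order, is indiscernible over `A`. -/
def IndiscTupleSeqOver (L : FirstOrder.Language.{u, u}) {M : Type u} [L.Structure M]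
    (A : Set M) {ι : Type*} [LinearOrder ι] {d : ℕ} (f : ι → Fin d → M) : Prop :=
  ∀ (n : ℕ) (s t : Fin n → ι), StrictMono s → StrictMono t →
    SameTypeOver L A (fun q : Fin n × Fin d => f (s q.1) q.2)
      (fun q : Fin n × Fin d => f (t q.1) q.2)

/-- A sequence of elements, indexed by a linear order, is indiscernible over `A`. -/
def IndiscSeqOver (L : FirstOrder.Language.{u, u}) {M : Type u} [L.Structure M]
    (A : Set M) {ι : Type*} [LinearOrder ι] (f : ι → M) : Prop :=
  ∀ (n : ℕ) (s t : Fin n → ι), StrictMono s → StrictMono t →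
    SameTypeOver L A (fun i => f (s i)) (fun i => f (t i))

/-- A family of elements is an indiscernible *set* over `A`: the type of a tuple of
distinct elements depends only on its length. -/
def IndiscSetOver (L : FirstOrder.Language.{u, u}) {M : Type u} [L.Structure M]
    (A : Set M) {ι : Type*} (f : ι → M) : Prop :=
  ∀ (n : ℕ) (s t : Fin n → ι), Function.Injective s → Function.Injective t →
    SameTypeOver L A (fun i => f (s i)) (fun i => f (t i))

/-- `p` is a complete consistent `m`-type over `B`: all parameters come from `B`, for each
formula over `B` it contains the formula or its negation, and every finite subset is
realized (in the monster). -/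
def IsTypeOver {m : ℕ} (p : Set (PFormula L M m)) (B : Set M) : Prop :=
  (∀ ψ ∈ p, ψ.Over B) ∧
  (∀ ψ : PFormula L M m, ψ.Over B → ψ ∈ p ∨ ψ.not ∈ p) ∧
  (∀ s : Finset (PFormula L M m), ↑s ⊆ p → ∃ a : Fin m → M, ∀ ψ ∈ s, ψ.Realize a)

/-- `p` is finitely satisfiable in `A`: every finite subset of `p` is realized by a tuple
from `A`. -/
def FinSatIn {m : ℕ} (p : Set (PFormula L M m)) (A : Set M) : Prop :=
  ∀ s : Finset (PFormula L M m), ↑s ⊆ p →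
    ∃ a : Fin m → M, (∀ i, a i ∈ A) ∧ ∀ ψ ∈ s, ψ.Realize a

/-- The complete type of an element `a` over the set `C`. -/
def tpOver (L : FirstOrder.Language.{u, u}) {M : Type u} [L.Structure M]
    (a : M) (C : Set M) : Set (PFormula L M 1) :=
  {ψ | ψ.Over C ∧ ψ.Realize1 a}

/-- `p` (a type with parameters in `B`) does not split over `A`. -/
def DoesNotSplitOver {m : ℕ} (p : Set (PFormula L M m)) (B A : Set M) : Prop :=
  ∀ (n : ℕ) (b c : Fin n → M) (φ : L.Formula (Fin m ⊕ Fin n)),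
    (∀ i, b i ∈ B) → (∀ i, c i ∈ B) → SameTypeOver L A b c →
    ((⟨n, φ, b⟩ : PFormula L M m) ∈ p ↔ (⟨n, φ, c⟩ : PFormula L M m) ∈ p)

/-- `p` (a type over `B`) is definable over `A`. -/
def DefinableOver {m : ℕ} (p : Set (PFormula L M m)) (B A : Set M) : Prop :=
  ∀ (n : ℕ) (φ : L.Formula (Fin m ⊕ Fin n)),
    ∃ (k : ℕ) (d : L.Formula (Fin n ⊕ Fin k)) (e : Fin k → M), (∀ i, e i ∈ A) ∧
      ∀ b : Fin n → M, (∀ i, b i ∈ B) →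
        ((⟨n, φ, b⟩ : PFormula L M m) ∈ p ↔ d.Realize (Sum.elim b e))

/-- The parametrized formula `ψ` divides over `A`. -/
def PFormula.Divides {m : ℕ} (ψ : PFormula L M m) (A : Set M) : Prop :=
  ∃ (f : ℕ → Fin ψ.n → M) (k : ℕ), 0 < k ∧ f 0 = ψ.par ∧ IndiscTupleSeqOver L A f ∧
    ∀ s : Finset ℕ, s.card = k →
      ¬ ∃ a : Fin m → M, ∀ i ∈ s, ψ.toFormula.Realize (Sum.elim a (f i))

/-- The (partial) type `p` forks over `A`: some finite subset of `p` implies a finite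
disjunction of formulas each of which divides over `A`. -/
def ForksOver {m : ℕ} (p : Set (PFormula L M m)) (A : Set M) : Prop :=
  ∃ (r : ℕ) (ψs : Fin r → PFormula L M m), (∀ j, (ψs j).Divides A) ∧
    ∃ s : Finset (PFormula L M m), ↑s ⊆ p ∧
      ∀ a : Fin m → M, (∀ χ ∈ s, χ.Realize a) → ∃ j, (ψs j).Realize a

/-- `p` splits strongly over `A`. -/
def SplitsStronglyOver {m : ℕ} (p : Set (PFormula L M m)) (A : Set M) : Prop :=
  ∃ (n : ℕ) (f : ℕ → Fin n → M) (φ : L.Formula (Fin m ⊕ Fin n)),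
    IndiscTupleSeqOver L A f ∧
    (⟨n, φ, f 0⟩ : PFormula L M m) ∈ p ∧ (PFormula.not ⟨n, φ, f 1⟩ : PFormula L M m) ∈ p

/-- Two tuples are of Lascar distance one over `A`: they lie on a common
`A`-indiscernible sequence. -/
def LascarDistOne (L : FirstOrder.Language.{u, u}) {M : Type u} [L.Structure M]
    (A : Set M) {n : ℕ} (b c : Fin n → M) : Prop :=
  ∃ f : ℕ → Fin n → M, IndiscTupleSeqOver L A f ∧ ∃ i j : ℕ, f i = b ∧ f j = c

/-- Two tuples have the same Lascar strong type over `A` (finite Lascar distance). -/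
def SameLstp (L : FirstOrder.Language.{u, u}) {M : Type u} [L.Structure M]
    (A : Set M) {n : ℕ} (b c : Fin n → M) : Prop :=
  Relation.ReflTransGen (fun x y => LascarDistOne L A x y) b c

/-- `p` (a type over `B`) Lascar-splits over `A`. -/
def LascarSplitsOver {m : ℕ} (p : Set (PFormula L M m)) (B A : Set M) : Prop :=
  ∃ (n : ℕ) (b c : Fin n → M) (φ : L.Formula (Fin m ⊕ Fin n)),
    (∀ i, b i ∈ B) ∧ (∀ i, c i ∈ B) ∧ SameLstp L A b c ∧
    (⟨n, φ, b⟩ : PFormula L M m) ∈ p ∧ (PFormula.not ⟨n, φ, c⟩ : PFormula L M m) ∈ p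

/-- The structure `M` is NIP ("dependent"): no formula alternates infinitely often on an
indiscernible sequence. -/
def IsNIP (L : FirstOrder.Language.{u, u}) (M : Type u) [L.Structure M] : Prop :=
  ∀ (d k : ℕ) (φ : L.Formula (Fin d ⊕ Fin k)) (f : ℕ → Fin d → M) (c : Fin k → M),
    IndiscTupleSeqOver L (∅ : Set M) f →
    ¬ ({i : ℕ | φ.Realize (Sum.elim (f i) c)}.Infinite ∧
        {i : ℕ | ¬ φ.Realize (Sum.elim (f i) c)}.Infinite)

/-- The subset `N` of the monster is `κ`-saturated: every type over a subset of `N` of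
size `< κ` which is finitely satisfiable is realized inside `N`. -/
def SetSaturated (L : FirstOrder.Language.{u, u}) {M : Type u} [L.Structure M]
    (N : Set M) (κ : Cardinal.{u}) : Prop :=
  ∀ C : Set M, C ⊆ N → #C < κ → ∀ (m : ℕ) (p : Set (PFormula L M m)),
    (∀ ψ ∈ p, ψ.Over C) →
    (∀ s : Finset (PFormula L M m), ↑s ⊆ p → ∃ a : Fin m → M, ∀ ψ ∈ s, ψ.Realize a) →
    ∃ a : Fin m → M, (∀ i, a i ∈ N) ∧ ∀ ψ ∈ p, ψ.Realize a

/-- `M` is a monster model: it is saturated in every cardinality below `#M`. -/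
def IsMonster (L : FirstOrder.Language.{u, u}) (M : Type u) [L.Structure M] : Prop :=
  ∀ κ : Cardinal.{u}, κ < #M → SetSaturated L (Set.univ : Set M) κ

/-- The average type of an `ω`-indexed indiscernible set over `C`: formulas over `C` true
of all but finitely many elements of the set. -/
def AvSet (L : FirstOrder.Language.{u, u}) {M : Type u} [L.Structure M]
    (f : ℕ → M) (C : Set M) : Set (PFormula L M 1) :=
  {ψ | ψ.Over C ∧ {i : ℕ | ¬ ψ.Realize1 (f i)}.Finite}

/-- The average type of an endless indiscernible sequence over `C`: formulas over `C`
true of all sufficiently late elements of the sequence. -/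
def AvSeq (L : FirstOrder.Language.{u, u}) {M : Type u} [L.Structure M]
    {ι : Type*} [LinearOrder ι] (f : ι → M) (C : Set M) : Set (PFormula L M 1) :=
  {ψ | ψ.Over C ∧ ∃ i₀ : ι, ∀ i ≥ i₀, ψ.Realize1 (f i)}

/-- The algebraic closure of `A` in `M`. -/
def aclSet (L : FirstOrder.Language.{u, u}) {M : Type u} [L.Structure M]
    (A : Set M) : Set M :=
  {a | ∃ ψ : PFormula L M 1, ψ.Over A ∧ ψ.Realize1 a ∧ {x : M | ψ.Realize1 x}.Finite}

/-- `p ∈ S(A)` is generically stable: there is a nonforking sequence of realizations of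
`p` over `A` which is an indiscernible set. -/
def GenericallyStable (p : Set (PFormula L M 1)) (A : Set M) : Prop :=
  ∃ f : ℕ → M,
    (∀ i, ∀ ψ ∈ p, ψ.Realize1 (f i)) ∧
    IndiscSetOver L A f ∧
    ∀ i : ℕ, ¬ ForksOver (tpOver L (f i) (A ∪ f '' {j | j < i})) A

/-- The Boolean algebra of `B`-definable subsets of `A^m`. -/
def DefSub (L : FirstOrder.Language.{u, u}) {M : Type u} [L.Structure M]
    (A B : Set M) (m : ℕ) : Set (Set (Fin m → M)) :=
  {S | ∃ ψ : PFormula L M m, ψ.Over B ∧ S = {a | (∀ i, a i ∈ A) ∧ ψ.Realize a}}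

/-- An ultrafilter on the Boolean algebra of `B`-definable subsets of `A^m`. -/
structure UltraOn (L : FirstOrder.Language.{u, u}) {M : Type u} [L.Structure M]
    (A B : Set M) (m : ℕ) where
  sets : Set (Set (Fin m → M))
  subset_def : sets ⊆ DefSub L A B m
  inter_mem : ∀ S ∈ sets, ∀ T ∈ sets, S ∩ T ∈ sets
  superset_mem : ∀ S ∈ sets, ∀ T ∈ DefSub L A B m, S ⊆ T → T ∈ sets
  nonempty_mem : ∀ S ∈ sets, S.Nonempty
  ultra : ∀ S ∈ DefSub L A B m,
    S ∈ sets ∨ ({a : Fin m → M | ∀ i, a i ∈ A} \ S) ∈ sets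

/-- The average type of an ultrafilter on `Def_m(A,B)` over `B`. -/
def AvU {A B : Set M} {m : ℕ} (U : UltraOn L A B m) : Set (PFormula L M m) :=
  {ψ | ψ.Over B ∧ {a : Fin m → M | (∀ i, a i ∈ A) ∧ ψ.Realize a} ∈ U.sets}

namespace OPQO

theorem elim_swap {α β γ : Type*} (f : α → γ) (g : β → γ) :
    Sum.elim f g ∘ Sum.swap = Sum.elim g f := by
  funext q; rcases q with q | q <;> rfl

/-- A monster which is infinite realizes types over finite sets. -/
theorem omega_sat (hM : IsMonster L M) [Infinite M] (k : ℕ) (v : Fin k → M)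
    (p : Set (PFormula L M 1)) (hp : ∀ ψ ∈ p, ψ.Over (Set.range v))
    (hfin : ∀ s : Finset (PFormula L M 1), ↑s ⊆ p → ∃ a : Fin 1 → M, ∀ ψ ∈ s, ψ.Realize a) :
    ∃ a : Fin 1 → M, ∀ ψ ∈ p, ψ.Realize a := by
  have hC : #(Set.range v) < ℵ₀ := Cardinal.lt_aleph0_of_finite _
  obtain ⟨m, hm⟩ := Cardinal.lt_aleph0.1 hC
  have h1 : ((m + 1 : ℕ) : Cardinal.{u}) < #M :=
    lt_of_lt_of_le (Cardinal.natCast_lt_aleph0) (Cardinal.aleph0_le_mk M)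
  have h2 : #(Set.range v) < ((m + 1 : ℕ) : Cardinal.{u}) := by
    rw [hm]; exact_mod_cast Nat.lt_succ_self m
  obtain ⟨a, -, ha⟩ := hM _ h1 (Set.range v) (Set.subset_univ _) h2 1 p hp hfin
  exact ⟨a, ha⟩

/-- `v` realizes the ultrafilter-limit type of the first `k` entries of the `z n`. -/
def Good (L : FirstOrder.Language.{u, u}) {M : Type u} [L.Structure M]
    (U : Ultrafilter ℕ) (z : ℕ → ℕ → M) (k : ℕ) (v : Fin k → M) : Prop :=
  ∀ ψ : L.Formula (Fin k), ψ.Realize v ↔ ∀ᶠ n in (U : Filter ℕ), ψ.Realize (fun i : Fin k => z n i)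

theorem good_of_imp {U : Ultrafilter ℕ} {z : ℕ → ℕ → M} {k : ℕ} {v : Fin k → M}
    (h : ∀ ψ : L.Formula (Fin k), (∀ᶠ n in (U : Filter ℕ), ψ.Realize (fun i : Fin k => z n i)) →
      ψ.Realize v) : Good L U z k v := by
  intro ψ
  refine ⟨fun hψ => ?_, h ψ⟩
  by_contra hc
  have h2 : ∀ᶠ n in (U : Filter ℕ), ψ.not.Realize (fun i : Fin k => z n i) := by
    have := Ultrafilter.eventually_not.2 hc
    simpa using this
  exact (h _ h2) hψ

theorem good_zero (U : Ultrafilter ℕ) (z : ℕ → ℕ → M) (v : Fin 0 → M) : Good L U z 0 v := by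
  apply good_of_imp
  intro ψ h
  obtain ⟨n, hn⟩ := h.exists
  rwa [Subsingleton.elim v (fun i : Fin 0 => z n i)]

theorem good_step (hM : IsMonster L M) [Infinite M] {U : Ultrafilter ℕ} {z : ℕ → ℕ → M} {k : ℕ}
    {v : Fin k → M} (hv : Good L U z k v) :
    ∃ y : M, Good L U z (k + 1) (Fin.snoc v y) := by
  let p : Set (PFormula L M 1) := {χ | ∃ ψ : L.Formula (Fin 1 ⊕ Fin k), χ = ⟨k, ψ, v⟩ ∧
    ∀ᶠ n in (U : Filter ℕ), ψ.Realize (Sum.elim (fun _ => z n k) (fun i : Fin k => z n i))}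
  obtain ⟨y, hy⟩ := omega_sat hM k v p
    (by rintro _ ⟨ψ, rfl, -⟩ i; exact ⟨i, rfl⟩)
    (by
      intro s hs
      have hs' : ∀ χ : s, ∃ ψ : L.Formula (Fin 1 ⊕ Fin k), χ.1 = ⟨k, ψ, v⟩ ∧
          ∀ᶠ n in (U : Filter ℕ),
            ψ.Realize (Sum.elim (fun _ => z n k) (fun i : Fin k => z n i)) :=
        fun χ => hs χ.2
      choose ψ hψ1 hψ2 using hs'
      have hall : ∀ᶠ n in (U : Filter ℕ), ∀ χ : s,
          (ψ χ).Realize (Sum.elim (fun _ => z n k) (fun i : Fin k => z n i)) :=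
        Filter.eventually_all.2 hψ2
      let Θ : L.Formula (Fin k) :=
        Language.Formula.iExs (Fin 1)
          ((Language.Formula.iInf ψ).relabel (Sum.swap : Fin 1 ⊕ Fin k → Fin k ⊕ Fin 1))
      have hΘ : ∀ w : Fin k → M, Θ.Realize w ↔
          ∃ y : Fin 1 → M, ∀ χ : s, (ψ χ).Realize (Sum.elim y w) := by
        intro w
        simp only [Θ, Language.Formula.realize_iExs, Language.Formula.realize_relabel,
          Language.Formula.realize_iInf, elim_swap]
      have h3 : Θ.Realize v := (hv Θ).2 (by
        filter_upwards [hall] with n hn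
        exact (hΘ _).2 ⟨_, hn⟩)
      obtain ⟨y, hy⟩ := (hΘ _).1 h3
      refine ⟨y, fun χ hχ => ?_⟩
      have h4 := hy ⟨χ, hχ⟩
      have h5 := hψ1 ⟨χ, hχ⟩
      simp only at h5
      rw [h5]
      exact h4)
  refine ⟨y 0, good_of_imp fun ψ hψ => ?_⟩
  let g : Fin (k + 1) → Fin 1 ⊕ Fin k := Fin.snoc (fun i => Sum.inr i) (Sum.inl 0)
  have hg : ∀ (x : Fin 1 → M) (w : Fin k → M), Sum.elim x w ∘ g = Fin.snoc w (x 0) := by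
    intro x w
    funext i
    refine Fin.lastCases ?_ (fun j => ?_) i <;> simp [g]
  have h6 : (⟨k, ψ.relabel g, v⟩ : PFormula L M 1) ∈ p := by
    refine ⟨_, rfl, ?_⟩
    filter_upwards [hψ] with n hn
    rw [Language.Formula.realize_relabel, hg]
    convert hn using 1
    funext i
    refine Fin.lastCases ?_ (fun j => ?_) i <;> simp
  have h7 := hy _ h6
  simp only [PFormula.Realize, Language.Formula.realize_relabel, hg] at h7
  exact h7

/-- Limit types in countably many variables are realized. -/
theorem exists_limit_nat (hM : IsMonster L M) [Infinite M] (U : Ultrafilter ℕ) (z : ℕ → ℕ → M) :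
    ∃ w : ℕ → M, ∀ k, Good L U z k (fun i => w i) := by
  classical
  let v : (k : ℕ) → {v : Fin k → M // Good L U z k v} := fun k =>
    Nat.rec ⟨Fin.elim0, good_zero U z _⟩
      (fun k v => ⟨Fin.snoc v.1 (good_step hM v.2).choose, (good_step hM v.2).choose_spec⟩) k
  have hv : ∀ k, (v (k + 1)).1 = Fin.snoc (v k).1 (good_step hM (v k).2).choose := fun k => rfl
  let w : ℕ → M := fun i => (v (i + 1)).1 (Fin.last i)
  have hw : ∀ k, (v k).1 = fun i : Fin k => w i := by
    intro k
    induction k with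
    | zero => funext i; exact i.elim0
    | succ k ih =>
      funext i
      refine Fin.lastCases ?_ (fun j => ?_) i
      · rfl
      · rw [hv, Fin.snoc_castSucc, ih]; rfl
  refine ⟨w, fun k => ?_⟩
  rw [← hw]
  exact (v k).2

theorem exists_limit (hM : IsMonster L M) [Infinite M] (U : Ultrafilter ℕ) {α : Type}
    [Countable α] (z : ℕ → α → M) :
    ∃ w : α → M, ∀ (γ : Type) [Finite γ] (s : γ → α) (ψ : L.Formula γ),
      ψ.Realize (w ∘ s) ↔ ∀ᶠ n in (U : Filter ℕ), ψ.Realize (z n ∘ s) := by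
  obtain ⟨f, hf⟩ := exists_injective_nat α
  obtain ⟨m0⟩ : Nonempty M := inferInstance
  obtain ⟨w, hw⟩ := exists_limit_nat (L := L) hM U
    (fun n => Function.extend f (z n) (fun _ => m0))
  refine ⟨w ∘ f, fun γ _ s ψ => ?_⟩
  obtain ⟨K, hK⟩ := (Set.finite_range (fun c => f (s c))).bddAbove
  have hK' : ∀ c, f (s c) < K + 1 := fun c => Nat.lt_succ_of_le (hK ⟨c, rfl⟩)
  have := hw (K + 1) (ψ.relabel (fun c => (⟨f (s c), hK' c⟩ : Fin (K + 1))))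
  simp only [Language.Formula.realize_relabel] at this
  have h2 : ∀ n, ((fun i : Fin (K + 1) => Function.extend f (z n) (fun _ => m0) i) ∘
      (fun c => (⟨f (s c), hK' c⟩ : Fin (K + 1)))) = z n ∘ s := by
    intro n
    funext c
    simp [hf.extend_apply]
  simp only [h2] at this
  exact this

/-- NIP gives an inconsistent alternating pattern. -/
theorem exists_inconsistent (hM : IsMonster L M) [Infinite M] (hNIP : IsNIP L M)
    {d e : ℕ} (φ : L.Formula (Fin d ⊕ Fin e)) (b : ℚ → Fin e → M)
    (hb : IndiscTupleSeqOver L (∅ : Set M) b) :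
    ∃ n : ℕ, ¬ ∃ x : Fin d → M, ∀ i < n, (φ.Realize (Sum.elim x (b (i : ℚ))) ↔ Even i) := by
  by_contra hcon
  push Not at hcon
  choose c hc using hcon
  let U : Ultrafilter ℕ := Filter.hyperfilter ℕ
  let z : ℕ → (Fin d ⊕ ℕ × Fin e) → M := fun n =>
    Sum.elim (c n) (fun q => b (q.1 : ℚ) q.2)
  obtain ⟨w, hw⟩ := exists_limit (L := L) hM U z
  let f : ℕ → Fin e → M := fun i j => w (Sum.inr (i, j))
  let c' : Fin d → M := fun j => w (Sum.inl j)
  have hφ : ∀ i, φ.Realize (Sum.elim c' (f i)) ↔ Even i := by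
    intro i
    have h := hw (Fin d ⊕ Fin e) (Sum.map id (fun j => (i, j))) φ
    have h1 : w ∘ (Sum.map id (fun j => (i, j))) = Sum.elim c' (f i) := by
      funext q; rcases q with q | q <;> rfl
    have h2 : ∀ n, z n ∘ (Sum.map id (fun j => (i, j))) = Sum.elim (c n) (b (i : ℚ)) := by
      intro n; funext q; rcases q with q | q <;> rfl
    simp only [h1, h2] at h
    rw [h]
    have hev : ∀ᶠ n in (U : Filter ℕ), i < n := by
      have : ∀ᶠ n in (Filter.atTop : Filter ℕ), i < n := Filter.eventually_gt_atTop i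
      rw [← Nat.cofinite_eq_atTop] at this
      exact Filter.hyperfilter_le_cofinite this
    have h3 : ∀ᶠ n in (U : Filter ℕ), (φ.Realize (Sum.elim (c n) (b (i : ℚ))) ↔ Even i) := by
      filter_upwards [hev] with n hn using hc n i hn
    rw [Filter.eventually_congr h3, Filter.eventually_const]
  have hf : IndiscTupleSeqOver L (∅ : Set M) f := by
    intro n s t hs ht k ψ par hpar
    have hk : k = 0 := by
      by_contra hk
      exact hpar ⟨0, Nat.pos_of_ne_zero hk⟩
    subst hk
    have key : ∀ s : Fin n → ℕ,
        ψ.Realize (Sum.elim (fun q : Fin n × Fin e => f (s q.1) q.2) par) ↔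
        ψ.Realize (Sum.elim (fun q : Fin n × Fin e => b ((s q.1 : ℕ) : ℚ) q.2) par) := by
      intro s
      have h := hw ((Fin n × Fin e) ⊕ Fin 0)
        (Sum.elim (fun q => Sum.inr (s q.1, q.2)) Fin.elim0) ψ
      have h1 : w ∘ (Sum.elim (fun q : Fin n × Fin e => Sum.inr (s q.1, q.2)) Fin.elim0) =
          Sum.elim (fun q : Fin n × Fin e => f (s q.1) q.2) par := by
        funext q; rcases q with q | q
        · rfl
        · exact q.elim0
      have h2 : ∀ m, z m ∘ (Sum.elim (fun q : Fin n × Fin e => Sum.inr (s q.1, q.2)) Fin.elim0) =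
          Sum.elim (fun q : Fin n × Fin e => b ((s q.1 : ℕ) : ℚ) q.2) par := by
        intro m
        funext q; rcases q with q | q
        · rfl
        · exact q.elim0
      simp only [h1, h2, Filter.eventually_const] at h
      exact h
    rw [key s, key t]
    exact hb n (fun i => ((s i : ℕ) : ℚ)) (fun i => ((t i : ℕ) : ℚ))
      (fun i j h => Nat.cast_lt.2 (hs h)) (fun i j h => Nat.cast_lt.2 (ht h)) 0 ψ par hpar
  refine hNIP e d (φ.relabel Sum.swap) f c' hf ⟨?_, ?_⟩
  · simp only [Language.Formula.realize_relabel, elim_swap, hφ]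
    exact Set.infinite_of_injective_forall_mem (f := fun n : ℕ => 2 * n)
      (fun x y h => by simpa using h) (fun n => by simp)
  · simp only [Language.Formula.realize_relabel, elim_swap, hφ]
    exact Set.infinite_of_injective_forall_mem (f := fun n : ℕ => 2 * n + 1)
      (fun x y h => by simpa using h) (fun n => by simp)

/-- Bubble sort argument. -/
theorem exists_swap {d e : ℕ} (φ : L.Formula (Fin d ⊕ Fin e))
    (a : ℚ → Fin d → M) (b : ℚ → Fin e → M)
    (hop : ∀ i j : ℚ, φ.Realize (Sum.elim (a i) (b j)) ↔ i < j) (n : ℕ) :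
    ∀ (r : ℕ) (T : Finset ℕ), ∑ j ∈ T, (n - j) = r →
      (¬ ∃ x : Fin d → M, ∀ i < n, (φ.Realize (Sum.elim x (b (i : ℚ))) ↔ i ∈ T)) →
      ∃ (T : Finset ℕ) (i : ℕ), i + 1 < n ∧ i ∈ T ∧ i + 1 ∉ T ∧
        (¬ ∃ x : Fin d → M, ∀ i < n, (φ.Realize (Sum.elim x (b (i : ℚ))) ↔ i ∈ T)) ∧
        ∃ x : Fin d → M, ∀ j < n,
          (φ.Realize (Sum.elim x (b (j : ℚ))) ↔ j ∈ insert (i + 1) (T.erase i)) := by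
  intro r
  induction r using Nat.strong_induction_on with
  | _ r ih =>
    intro T hT hincon
    by_cases hup : ∀ i, i + 1 < n → i ∈ T → i + 1 ∈ T
    · exfalso
      apply hincon
      classical
      have hex : ∃ k, n ≤ k ∨ k ∈ T := ⟨n, Or.inl le_rfl⟩
      let k := Nat.find hex
      have hk : n ≤ k ∨ k ∈ T := Nat.find_spec hex
      have hmin : ∀ m < k, ¬ (n ≤ m ∨ m ∈ T) := fun m hm => Nat.find_min hex hm
      refine ⟨a ((k : ℚ) - 1 / 2), fun i hi => ?_⟩
      rw [hop]
      have h1 : ((k : ℚ) - 1 / 2 < (i : ℚ)) ↔ k ≤ i := by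
        constructor
        · intro h
          by_contra hc
          have : (i : ℚ) + 1 ≤ k := by exact_mod_cast Nat.lt_of_not_le hc
          linarith
        · intro h
          have : (k : ℚ) ≤ i := by exact_mod_cast h
          linarith
      rw [h1]
      constructor
      · intro hki
        have hkT : k ∈ T := hk.resolve_left (by omega)
        clear_value k
        induction i, hki using Nat.le_induction with
        | base => exact hkT
        | succ m hm ihm => exact hup m hi (ihm (by omega) (by
            constructor
            · intro; exact_mod_cast (by linarith [show (k : ℚ) ≤ m by exact_mod_cast hm])
            · intro
              have : (k : ℚ) ≤ m := by exact_mod_cast hm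
              linarith))
      · intro hiT
        by_contra hc
        exact hmin i (by omega) (Or.inr hiT)
    · push Not at hup
      obtain ⟨i, hi, hiT, hiT'⟩ := hup
      by_cases hcon : ∃ x : Fin d → M, ∀ j < n,
          (φ.Realize (Sum.elim x (b (j : ℚ))) ↔ j ∈ insert (i + 1) (T.erase i))
      · exact ⟨T, i, hi, hiT, hiT', hincon, hcon⟩
      · refine ih _ ?_ (insert (i + 1) (T.erase i)) rfl hcon
        rw [Finset.sum_insert (by simp [hiT'])]
        have := Finset.add_sum_erase T (fun j => n - j) hiT
        omega

/-- The defining formula of the quasi-order. -/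
theorem exists_theta {d e n : ℕ} (φ : L.Formula (Fin d ⊕ Fin e)) (T : Finset ℕ) (i : ℕ) :
    ∃ Θ : L.Formula ((Fin e ⊕ Fin e) ⊕ (Fin n × Fin e)),
      ∀ (u v : Fin e → M) (B : Fin n × Fin e → M), Θ.Realize (Sum.elim (Sum.elim u v) B) ↔
        ∀ x : Fin d → M, (∀ j : Fin n, j.1 ≠ i → j.1 ≠ i + 1 →
            (φ.Realize (Sum.elim x (fun l => B (j, l))) ↔ j.1 ∈ T)) →
          φ.Realize (Sum.elim x u) → φ.Realize (Sum.elim x v) := by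
  classical
  let A := ((Fin e ⊕ Fin e) ⊕ (Fin n × Fin e)) ⊕ Fin d
  let φu : L.Formula A := φ.relabel (Sum.elim Sum.inr (fun l => Sum.inl (Sum.inl (Sum.inl l))))
  let φv : L.Formula A := φ.relabel (Sum.elim Sum.inr (fun l => Sum.inl (Sum.inl (Sum.inr l))))
  let φj : Fin n → L.Formula A := fun j =>
    φ.relabel (Sum.elim Sum.inr (fun l => Sum.inl (Sum.inr (j, l))))
  let χ : Fin n → L.Formula A := fun j =>
    if j.1 ≠ i ∧ j.1 ≠ i + 1 then (if j.1 ∈ T then φj j else (φj j).not) else ⊤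
  refine ⟨Language.Formula.iAlls (Fin d) ((Language.Formula.iInf χ).imp (φu.imp φv)), ?_⟩
  intro u v B
  have hu : ∀ x, φu.Realize (Sum.elim (Sum.elim (Sum.elim u v) B) x) ↔
      φ.Realize (Sum.elim x u) := by
    intro x
    simp only [φu, Language.Formula.realize_relabel]
    apply iff_of_eq; congr 1
    funext q; rcases q with q | q <;> rfl
  have hv : ∀ x, φv.Realize (Sum.elim (Sum.elim (Sum.elim u v) B) x) ↔
      φ.Realize (Sum.elim x v) := by
    intro x
    simp only [φv, Language.Formula.realize_relabel]
    apply iff_of_eq; congr 1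
    funext q; rcases q with q | q <;> rfl
  have hj : ∀ j x, (φj j).Realize (Sum.elim (Sum.elim (Sum.elim u v) B) x) ↔
      φ.Realize (Sum.elim x (fun l => B (j, l))) := by
    intro j x
    simp only [φj, Language.Formula.realize_relabel]
    apply iff_of_eq; congr 1
    funext q; rcases q with q | q <;> rfl
  have hχ : ∀ j x, (χ j).Realize (Sum.elim (Sum.elim (Sum.elim u v) B) x) ↔
      (j.1 ≠ i → j.1 ≠ i + 1 →
            (φ.Realize (Sum.elim x (fun l => B (j, l))) ↔ j.1 ∈ T)) := by
    intro j x
    rw [← hj]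
    simp only [χ]
    split_ifs with h1 h2
    · simp [h1, h2]
    · simp [h1, h2]
    · simp only [Language.Formula.realize_top, true_iff]
      tauto
  simp only [Language.Formula.realize_iAlls, Language.Formula.realize_imp,
    Language.Formula.realize_iInf, hu, hv, hχ]

end OPQO

/-- In an NIP theory, if an unstable formula `φ(x,y)` has the order
property witnessed by indiscernible sequences `I` and `J` (indexed by ℚ), then there is
a formula `ϑ(y₁,y₂)` with parameters from `∪J` which defines a quasi-order on the
monster model and linearly orders an infinite subsequence of `J`. -/
theorem order_property_gives_quasi_order
    (hM : IsMonster L M) (hNIP : IsNIP L M)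
    {d e : ℕ} (φ : L.Formula (Fin d ⊕ Fin e))
    (a : ℚ → Fin d → M) (b : ℚ → Fin e → M)
    (ha : IndiscTupleSeqOver L (∅ : Set M) a)
    (hb : IndiscTupleSeqOver L (∅ : Set M) b)
    (hop : ∀ i j : ℚ, φ.Realize (Sum.elim (a i) (b j)) ↔ i < j) :
    ∃ (k : ℕ) (ϑ : L.Formula ((Fin e ⊕ Fin e) ⊕ Fin k)) (c : Fin k → M),
      -- the parameters come from ∪J
      (∀ i : Fin k, ∃ (q : ℚ) (j : Fin e), c i = b q j) ∧
      -- ϑ is reflexive on the monster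
      (∀ u : Fin e → M, ϑ.Realize (Sum.elim (Sum.elim u u) c)) ∧
      -- ϑ is transitive on the monster
      (∀ u v w : Fin e → M, ϑ.Realize (Sum.elim (Sum.elim u v) c) →
        ϑ.Realize (Sum.elim (Sum.elim v w) c) →
        ϑ.Realize (Sum.elim (Sum.elim u w) c)) ∧
      -- ϑ linearly orders an infinite subsequence of J
      ∃ S : Set ℚ, S.Infinite ∧
        (∀ q₁ ∈ S, ∀ q₂ ∈ S,
          ϑ.Realize (Sum.elim (Sum.elim (b q₁) (b q₂)) c) ∨
          ϑ.Realize (Sum.elim (Sum.elim (b q₂) (b q₁)) c)) ∧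
        (∀ q₁ ∈ S, ∀ q₂ ∈ S,
          ϑ.Realize (Sum.elim (Sum.elim (b q₁) (b q₂)) c) →
          ϑ.Realize (Sum.elim (Sum.elim (b q₂) (b q₁)) c) → q₁ = q₂) := by
  classical
  have hinj : Function.Injective b := by
    have key : ∀ q q' : ℚ, q < q' → b q ≠ b q' := by
      intro q q' h heq
      have h1 := (hop q q').2 h
      rw [← heq, hop] at h1
      exact lt_irrefl _ h1
    intro q q' heq
    rcases lt_trichotomy q q' with h | h | h
    · exact absurd heq (key _ _ h)
    · exact h
    · exact absurd heq.symm (key _ _ h)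
  haveI : Infinite M := by
    by_contra hfin
    rw [not_infinite_iff_finite] at hfin
    haveI := Finite.of_injective b hinj
    exact not_finite ℚ
  obtain ⟨n, hn⟩ := OPQO.exists_inconsistent hM hNIP φ b hb
  obtain ⟨T, i, hi, hiT, hiT', hinc, x0, hx0⟩ :=
    OPQO.exists_swap φ a b hop n _ ((Finset.range n).filter Even) rfl (by
      rintro ⟨x, hx⟩
      refine hn ⟨x, fun i hi => ?_⟩
      rw [hx i hi]
      simp [hi])
  obtain ⟨Θ, hΘ⟩ := OPQO.exists_theta (L := L) (M := M) (n := n) φ T i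
  let B : Fin n × Fin e → M := fun q => b (q.1.1 : ℚ) q.2
  let E : Fin n × Fin e ≃ Fin (n * e) := finProdFinEquiv
  let ϑ : L.Formula ((Fin e ⊕ Fin e) ⊕ Fin (n * e)) := Θ.relabel (Sum.map id E)
  have hϑ : ∀ u v : Fin e → M, ϑ.Realize (Sum.elim (Sum.elim u v) (B ∘ E.symm)) ↔
      Θ.Realize (Sum.elim (Sum.elim u v) B) := by
    intro u v
    simp only [ϑ, Language.Formula.realize_relabel]
    apply iff_of_eq; congr 1
    funext q; rcases q with q | q <;> simp
  have hϑ' : ∀ u v : Fin e → M, ϑ.Realize (Sum.elim (Sum.elim u v) (B ∘ E.symm)) ↔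
      ∀ x : Fin d → M, (∀ j : Fin n, j.1 ≠ i → j.1 ≠ i + 1 →
            (φ.Realize (Sum.elim x (b (j.1 : ℚ))) ↔ j.1 ∈ T)) →
          φ.Realize (Sum.elim x u) → φ.Realize (Sum.elim x v) := by
    intro u v
    rw [hϑ, hΘ]
  -- base case
  have base1 : ϑ.Realize (Sum.elim (Sum.elim (b (i : ℚ)) (b ((i + 1 : ℕ) : ℚ))) (B ∘ E.symm)) := by
    rw [hϑ']
    intro x hx hxi
    by_contra hxi'
    refine hinc ⟨x, fun j hj => ?_⟩
    by_cases h1 : j = i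
    · subst h1; simp [hxi, hiT]
    · by_cases h2 : j = i + 1
      · subst h2; simp only [hxi', hiT']
      · exact hx ⟨j, hj⟩ h1 h2
  have base2 :
      ¬ ϑ.Realize (Sum.elim (Sum.elim (b ((i + 1 : ℕ) : ℚ)) (b (i : ℚ))) (B ∘ E.symm)) := by
    rw [hϑ']
    intro h
    have h1 := h x0 (fun j h1 h2 => by
      rw [hx0 j.1 j.2]
      simp [h1, h2]) (by rw [hx0 _ hi]; simp)
    rw [hx0 _ (by omega)] at h1
    simp at h1
  let i0 : Fin n := ⟨i, by omega⟩
  let i1 : Fin n := ⟨i + 1, hi⟩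
  have hi01 : i1 ≠ i0 := by simp [i0, i1]
  let s : Fin n → ℚ := fun j => (j.1 : ℚ)
  have hs : StrictMono s := fun j j' h => Nat.cast_lt.2 h
  -- transfer by indiscernibility
  have transfer : ∀ q₁ q₂ : ℚ, (i : ℚ) ≤ q₁ → q₁ < q₂ → q₂ ≤ (i : ℚ) + 1 →
      (ϑ.Realize (Sum.elim (Sum.elim (b q₁) (b q₂)) (B ∘ E.symm)) ∧
        ¬ ϑ.Realize (Sum.elim (Sum.elim (b q₂) (b q₁)) (B ∘ E.symm))) := by
    intro q₁ q₂ h1 h2 h3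
    let t : Fin n → ℚ := fun j => if j.1 = i then q₁ else if j.1 = i + 1 then q₂ else (j.1 : ℚ)
    have ht : StrictMono t := by
      intro j j' hjj
      have hlt : j.1 < j'.1 := hjj
      have hc : ∀ x y : ℕ, x < y → (x : ℚ) + 1 ≤ y := fun x y h => by exact_mod_cast h
      have ha1 := hc _ _ hlt
      simp only [t]
      split_ifs with g1 g2 g3 g4 g5 g6 g7 g8
      · omega
      · exact h2
      · have := hc (i + 1) j'.1 (by omega)
        push_cast at this
        linarith
      · omega
      · omega
      · have := hc (i + 1) j'.1 (by omega)
        push_cast at this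
        linarith
      · have := hc j.1 i (by omega)
        linarith
      · have := hc j.1 i (by omega)
        linarith
      · linarith
    let g : Fin n → Fin n → ((Fin e ⊕ Fin e) ⊕ (Fin n × Fin e)) → (Fin n × Fin e) ⊕ Fin 0 :=
      fun k k' => Sum.elim (Sum.elim (fun l => Sum.inl (k, l)) (fun l => Sum.inl (k', l)))
        (fun q => Sum.inl q)
    have hg : ∀ (k k' : Fin n) (r : Fin n → ℚ),
        (Θ.relabel (g k k')).Realize
          (Sum.elim (fun q : Fin n × Fin e => b (r q.1) q.2) (Fin.elim0 : Fin 0 → M)) ↔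
        Θ.Realize (Sum.elim (Sum.elim (b (r k)) (b (r k')))
          (fun q : Fin n × Fin e => b (r q.1) q.2)) := by
      intro k k' r
      rw [Language.Formula.realize_relabel]
      apply iff_of_eq; congr 1
      funext q; rcases q with (q | q) | q <;> rfl
    have hind : ∀ k k' : Fin n,
        Θ.Realize (Sum.elim (Sum.elim (b (s k)) (b (s k'))) B) ↔
        Θ.Realize (Sum.elim (Sum.elim (b (t k)) (b (t k'))) B) := by
      intro k k'
      have h := hb n s t hs ht 0 (Θ.relabel (g k k')) Fin.elim0 (fun q => q.elim0)
      rw [hg, hg] at h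
      refine h.trans ?_
      rw [hΘ, hΘ]
      refine forall_congr' fun x => imp_congr_left (forall_congr' fun j => ?_)
      refine imp_congr_right fun g1 => imp_congr_right fun g2 => ?_
      simp only [B, t, g1, g2, if_false]
    have ht0 : t i0 = q₁ := by simp [t, i0]
    have ht1 : t i1 = q₂ := by simp [t, i1]
    have e1 := hind i0 i1
    have e2 := hind i1 i0
    rw [ht0, ht1] at e1 e2
    rw [hϑ] at base1 base2
    rw [hϑ, hϑ]
    exact ⟨e1.1 base1, fun h => base2 (e2.2 h)⟩
  have hrefl : ∀ u : Fin e → M, ϑ.Realize (Sum.elim (Sum.elim u u) (B ∘ E.symm)) := by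
    intro u
    rw [hϑ']
    exact fun x _ h => h
  refine ⟨n * e, ϑ, B ∘ E.symm, fun q => ⟨_, _, rfl⟩, hrefl, ?_, Set.Icc (i : ℚ) (i + 1),
    Set.Icc_infinite (by linarith), ?_, ?_⟩
  · intro u v w h1 h2
    rw [hϑ'] at h1 h2 ⊢
    exact fun x hx h => h2 x hx (h1 x hx h)
  · intro q₁ hq₁ q₂ hq₂
    rcases lt_trichotomy q₁ q₂ with h | h | h
    · exact Or.inl (transfer _ _ hq₁.1 h hq₂.2).1
    · subst h; exact Or.inl (hrefl _)
    · exact Or.inr (transfer _ _ hq₂.1 h hq₁.2).1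
  · intro q₁ hq₁ q₂ hq₂ h1 h2
    rcases lt_trichotomy q₁ q₂ with h | h | h
    · exact absurd h2 (transfer _ _ hq₁.1 h hq₂.2).2
    · exact h
    · exact absurd h1 (transfer _ _ hq₂.1 h hq₁.2).2
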